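/- arXiv:1811.09774 — 4 statements merged into one kernel-verified Lean document; each statement's English description precedes it below -/
import Mathlib

section
/- Let n ≥ 3. With Ω = dz₂∧dẑ₂∧dz₃∧dẑ₃∧⋯∧dz_{n−1}∧dẑ_{n−1}∧dz_n ∈ ⋀^{2n−3}_R Ω_{R/ℂ}, the iterated contraction satisfies ι_{V₁}ι_{V₂}⋯ι_{V_{n−1}} Ω = (−1)^n A₁ dA₃∧dA₄∧⋯∧dA_n + Σ_{j=3}^{n} (−1)^{n+j} A_j dA₁∧dA₃∧⋯∧dA_{j−1}∧dA_{j+1}∧⋯∧dA_n in ⋀^{n−2}_R Ω_{R/ℂ}. (This is Lemma 3.3 of the paper, the key contraction computation for the two-step flag variety Fℓ_{1,n−1;n}.) -/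
/-!
Lemma 3.3 of the paper: the key contraction computation for the two-step flag
variety `Fℓ_{1,n−1;n}`.

`R = ℂ[z₂,…,z_n, ẑ₂,…,ẑ_{n−1}]`, with conventions `z₁ = 1`, `ẑ_n = 1`,
`A_j = z_j ẑ_j` for `2 ≤ j ≤ n` and `A₁ = A₂ + ∑_{j=3}^n (−1)^j A_j`.
Contraction of `⋀_R Ω_{R/ℂ}` by a ℂ-derivation `V` is interior product by the
`R`-linear functional `Ω_{R/ℂ} → R` determined by `dg ↦ V g`.
-/

set_option synthInstance.maxHeartbeats 1000000
set_option maxHeartbeats 1000000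

noncomputable section

open MvPolynomial

/-- Index type for the `2n−3` variables: `z_j` for `2 ≤ j ≤ n` and `ẑ_j` for
`2 ≤ j ≤ n−1`. -/
abbrev FlagIdx (n : ℕ) := {j : ℕ // 2 ≤ j ∧ j ≤ n} ⊕ {j : ℕ // 2 ≤ j ∧ j ≤ n - 1}

/-- The coordinate ring `R = ℂ[z₂,…,z_n, ẑ₂,…,ẑ_{n−1}]`. -/
abbrev FlagR (n : ℕ) := MvPolynomial (FlagIdx n) ℂ

/-- The coordinate `z_j` (with the convention `z₁ = 1`). -/
def flagZ (n j : ℕ) : FlagR n :=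
  if h : 2 ≤ j ∧ j ≤ n then X (Sum.inl ⟨j, h⟩) else 1

/-- The coordinate `ẑ_j` (with the convention `ẑ_n = 1`). -/
def flagZh (n j : ℕ) : FlagR n :=
  if h : 2 ≤ j ∧ j ≤ n - 1 then X (Sum.inr ⟨j, h⟩) else 1

/-- `A_j = z_j ẑ_j` for `j ≥ 2` (so `A_n = z_n`), and
`A₁ = A₂ + ∑_{j=3}^n (−1)^j A_j`. -/
def flagA (n j : ℕ) : FlagR n :=
  if j = 1 then
    flagZ n 2 * flagZh n 2 + ∑ k ∈ Finset.Icc 3 n, (-1 : FlagR n) ^ k * (flagZ n k * flagZh n k)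
  else flagZ n j * flagZh n j

/-- The ℂ-derivations `V_{i−1} = z_i ∂/∂z_i − ẑ_i ∂/∂ẑ_i` for `2 ≤ i ≤ n−1`, and
`V_{n−1} = z_n ∂/∂z_n + ∑_{j=2}^{n−1} ẑ_j ∂/∂ẑ_j`. -/
def flagV (n i : ℕ) : Derivation ℂ (FlagR n) (FlagR n) :=
  if i = n - 1 then
    MvPolynomial.mkDerivation ℂ (fun s => match s with
      | Sum.inl ⟨j, _⟩ => if j = n then flagZ n j else 0
      | Sum.inr ⟨j, _⟩ => flagZh n j)
  else
    MvPolynomial.mkDerivation ℂ (fun s => match s with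
      | Sum.inl ⟨j, _⟩ => if j = i + 1 then flagZ n j else 0
      | Sum.inr ⟨j, _⟩ => if j = i + 1 then -(flagZh n j) else 0)

/-- Contraction (interior product) of `⋀_A Ω_{A/ℂ}` by the `A`-linear functional
`Ω_{A/ℂ} → A` determined by `dg ↦ V g`, for a ℂ-derivation `V` of `A`. -/
def contrDer {A : Type} [CommRing A] [Algebra ℂ A] (V : Derivation ℂ A A) :
    ExteriorAlgebra A (Ω[A⁄ℂ]) →ₗ[A] ExteriorAlgebra A (Ω[A⁄ℂ]) :=
  CliffordAlgebra.contractLeft ((KaehlerDifferential.linearMapEquivDerivation ℂ A).symm V)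

/-- `Ω = dz₂∧dẑ₂∧⋯∧dz_{n−1}∧dẑ_{n−1}∧dz_n ∈ ⋀^{2n−3}_R Ω_{R/ℂ}`. -/
def flagOmega (n : ℕ) : ExteriorAlgebra (FlagR n) (Ω[FlagR n⁄ℂ]) :=
  (((List.Ico 2 n).map (fun j =>
      ExteriorAlgebra.ι (FlagR n) (KaehlerDifferential.D ℂ (FlagR n) (flagZ n j)) *
      ExteriorAlgebra.ι (FlagR n) (KaehlerDifferential.D ℂ (FlagR n) (flagZh n j)))).prod) *
    ExteriorAlgebra.ι (FlagR n) (KaehlerDifferential.D ℂ (FlagR n) (flagZ n n))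

section GenericAux
variable {R M : Type*} [CommRing R] [AddCommGroup M] [Module R M]

theorem aux_contr_mul (d : Module.Dual R M) (a : M) (b : ExteriorAlgebra R M) :
    CliffordAlgebra.contractLeft d (ExteriorAlgebra.ι R a * b) =
      d a • b - ExteriorAlgebra.ι R a * CliffordAlgebra.contractLeft d b :=
  CliffordAlgebra.contractLeft_ι_mul d a b

theorem aux_contr_one (d : Module.Dual R M) :
    CliffordAlgebra.contractLeft d (1 : ExteriorAlgebra R M) = 0 :=
  CliffordAlgebra.contractLeft_one _ _

theorem aux_swap (x y : M) : ExteriorAlgebra.ι R x * ExteriorAlgebra.ι R y =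
    - (ExteriorAlgebra.ι R y * ExteriorAlgebra.ι R x) :=
  eq_neg_of_add_eq_zero_left (ExteriorAlgebra.ι_add_mul_swap x y)

theorem aux_mul_prod_zero (v : ℕ → M) (k : ℕ) (l : List ℕ) (h : k ∈ l) :
    ExteriorAlgebra.ι R (v k) * (l.map (fun j => ExteriorAlgebra.ι R (v j))).prod = 0 := by
  induction l with
  | nil => simp at h
  | cons a l ih =>
    rw [List.map_cons, List.prod_cons, ← mul_assoc]
    rcases List.mem_cons.1 h with rfl | h
    · rw [ExteriorAlgebra.ι_sq_zero, zero_mul]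
    · rw [aux_swap, neg_mul, mul_assoc, ih h, mul_zero, neg_zero]

theorem aux_contr_prod (d : Module.Dual R M) (v : ℕ → M) (m : ℕ) : ∀ a : ℕ,
    CliffordAlgebra.contractLeft d
      (((List.Ico a (a + m)).map (fun j => ExteriorAlgebra.ι R (v j))).prod) =
    ∑ j ∈ Finset.Ico a (a + m), ((-1 : R) ^ (a + j) * d (v j)) •
      ((((List.Ico a (a + m)).filter (fun k => k ≠ j)).map
        (fun j => ExteriorAlgebra.ι R (v j))).prod) := by
  induction m with
  | zero => intro a; simp
  | succ m ih =>
    intro a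
    have h1 : List.Ico a (a + (m + 1)) = a :: List.Ico (a + 1) (a + 1 + m) := by
      rw [List.Ico.eq_cons (by omega)]; congr 2; omega
    have h2 : Finset.Ico a (a + (m + 1)) = insert a (Finset.Ico (a + 1) (a + 1 + m)) := by
      ext x; simp; omega
    rw [h1, h2, Finset.sum_insert (by simp), List.map_cons, List.prod_cons, aux_contr_mul, ih,
      sub_eq_add_neg]
    congr 1
    · have : (List.filter (fun k => decide (k ≠ a)) (a :: List.Ico (a + 1) (a + 1 + m)))
          = List.Ico (a + 1) (a + 1 + m) := by
        rw [List.filter_cons_of_neg (by simp), List.filter_eq_self]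
        intro x hx
        rw [List.Ico.mem] at hx
        simp; omega
      rw [this, ← two_mul, pow_mul]; simp
    · rw [Finset.mul_sum, ← Finset.sum_neg_distrib]
      refine Finset.sum_congr rfl fun j hj => ?_
      rw [Finset.mem_Ico] at hj
      rw [List.filter_cons_of_pos (by simp; omega), List.map_cons, List.prod_cons,
        mul_smul_comm, ← neg_smul]
      congr 1
      ring

theorem aux_pair (d : Module.Dual R M) (a b : M) (y : ExteriorAlgebra R M) :
    CliffordAlgebra.contractLeft d (ExteriorAlgebra.ι R a * ExteriorAlgebra.ι R b * y) =
      ExteriorAlgebra.ι R (d a • b - d b • a) * y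
      + ExteriorAlgebra.ι R a * ExteriorAlgebra.ι R b * CliffordAlgebra.contractLeft d y := by
  rw [mul_assoc, aux_contr_mul, aux_contr_mul, map_sub, map_smul, map_smul, mul_sub, sub_mul,
    mul_smul_comm, smul_mul_assoc, smul_mul_assoc, mul_assoc]
  abel

theorem aux_pairs (d : Module.Dual R M) (p q : ℕ → M) (l : List ℕ)
    (h : ∀ j ∈ l, d (p j) = 0 ∧ d (q j) = 0) (y : ExteriorAlgebra R M) :
    CliffordAlgebra.contractLeft d
      ((l.map (fun j => ExteriorAlgebra.ι R (p j) * ExteriorAlgebra.ι R (q j))).prod * y) =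
      (l.map (fun j => ExteriorAlgebra.ι R (p j) * ExteriorAlgebra.ι R (q j))).prod *
        CliffordAlgebra.contractLeft d y := by
  induction l with
  | nil => simp
  | cons a l ih =>
    obtain ⟨h1, h2⟩ := h a (by simp)
    rw [List.map_cons, List.prod_cons, mul_assoc, aux_pair, h1, h2,
      ih (fun j hj => h j (List.mem_cons_of_mem _ hj))]
    simp [mul_assoc]

theorem aux_fold (d : ℕ → Module.Dual R M) (p q α : ℕ → M) (m : ℕ)
    (h0 : ∀ i j, 1 ≤ i → i < 1 + m → 2 ≤ j → j < 2 + m → j ≠ i + 1 →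
      d i (p j) = 0 ∧ d i (q j) = 0)
    (h1 : ∀ i, 1 ≤ i → i < 1 + m →
      d i (p (i + 1)) • q (i + 1) - d i (q (i + 1)) • p (i + 1) = α (i + 1))
    (h2 : ∀ i j, 1 ≤ i → i < 1 + m → 2 ≤ j → j < 2 + m → d i (α j) = 0) :
    ∀ y : ExteriorAlgebra R M,
    (∀ i, 1 ≤ i → i < 1 + m → CliffordAlgebra.contractLeft (d i) y = 0) →
    (List.Ico 1 (1 + m)).foldr (fun i ω => CliffordAlgebra.contractLeft (d i) ω)
      (((List.Ico 2 (2 + m)).map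
        (fun j => ExteriorAlgebra.ι R (p j) * ExteriorAlgebra.ι R (q j))).prod * y) =
    ((List.Ico 2 (2 + m)).map (fun j => ExteriorAlgebra.ι R (α j))).prod * y := by
  induction m with
  | zero => intro y _; simp
  | succ m ih =>
    intro y hy
    rw [← add_assoc, ← add_assoc, List.Ico.succ_top (by omega), List.Ico.succ_top (by omega),
      List.foldr_append, List.map_append, List.prod_append, mul_assoc, List.foldr_cons,
      List.foldr_nil, aux_pairs, List.map_append, List.prod_append, mul_assoc,
      List.map_singleton, List.prod_singleton, List.map_singleton, List.prod_singleton,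
      aux_pair, hy (1 + m) (by omega) (by omega)]
    · have e : 2 + m = (1 + m) + 1 := by omega
      rw [mul_zero, add_zero]
      conv_lhs => 
        rw [show d (1 + m) (p (2 + m)) • q (2 + m) - d (1 + m) (q (2 + m)) • p (2 + m)
          = α (2 + m) by rw [e]; exact h1 (1 + m) (by omega) (by omega)]
      refine ih (fun i j _ _ _ _ => h0 i j (by omega) (by omega) (by omega) (by omega))
        (fun i _ _ => h1 i (by omega) (by omega))
        (fun i j _ _ _ _ => h2 i j (by omega) (by omega) (by omega) (by omega)) _ ?_
      intro i hi hi'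
      rw [aux_contr_mul, hy i hi (by omega), h2 i _ hi (by omega) (by omega) (by omega)]
      simp
    · intro j hj
      rw [List.Ico.mem] at hj
      exact h0 _ _ (by omega) (by omega) (by omega) (by omega) (by omega)

theorem aux_fold_comm (d : ℕ → Module.Dual R M) (e : Module.Dual R M) (l : List ℕ)
    (y : ExteriorAlgebra R M) :
    l.foldr (fun i ω => CliffordAlgebra.contractLeft (d i) ω)
      (CliffordAlgebra.contractLeft e y) =
    (-1 : R) ^ l.length • CliffordAlgebra.contractLeft e
      (l.foldr (fun i ω => CliffordAlgebra.contractLeft (d i) ω) y) := by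
  induction l with
  | nil => simp
  | cons a l ih =>
    rw [List.foldr_cons, ih, map_smul, CliffordAlgebra.contractLeft_comm, List.foldr_cons,
      List.length_cons, pow_succ, mul_smul, neg_one_smul]

theorem aux_main (n : ℕ) (hn : 3 ≤ n) (d : ℕ → Module.Dual R M) (p q α : ℕ → M) (A : ℕ → R)
    (h0 : ∀ i j, 1 ≤ i → i < n - 1 → 2 ≤ j → j < n → j ≠ i + 1 →
      d i (p j) = 0 ∧ d i (q j) = 0)
    (h1 : ∀ i, 1 ≤ i → i < n - 1 →
      d i (p (i + 1)) • q (i + 1) - d i (q (i + 1)) • p (i + 1) = α (i + 1))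
    (h2 : ∀ i j, 1 ≤ i → i < n - 1 → 2 ≤ j → j ≤ n → d i (α j) = 0)
    (h3 : ∀ j, 1 ≤ j → j ≤ n → d (n - 1) (α j) = A j)
    (h4 : p n = α n)
    (h5 : α 1 = α 2 + ∑ k ∈ Finset.Icc 3 n, (-1 : R) ^ k • α k) :
    (List.Ico 1 n).foldr (fun i ω => CliffordAlgebra.contractLeft (d i) ω)
      (((List.Ico 2 n).map
        (fun j => ExteriorAlgebra.ι R (p j) * ExteriorAlgebra.ι R (q j))).prod *
          ExteriorAlgebra.ι R (p n)) =
      ((-1 : R) ^ n * A 1) •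
        (((List.Ico 3 (n + 1)).map (fun k => ExteriorAlgebra.ι R (α k))).prod)
      + ∑ j ∈ Finset.Icc 3 n, ((-1 : R) ^ (n + j) * A j) •
          (ExteriorAlgebra.ι R (α 1) *
            (((List.Ico 3 (n + 1)).filter (fun k => k ≠ j)).map (fun k =>
              ExteriorAlgebra.ι R (α k))).prod) := by
  obtain ⟨m, rfl⟩ : ∃ m, n = 2 + m := ⟨n - 2, by omega⟩
  have e1 : 2 + m - 1 = 1 + m := by omega
  rw [e1] at h0 h1 h2 h3
  have hs : List.Ico 1 (2 + m) = List.Ico 1 (1 + m) ++ [1 + m] := by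
    rw [← List.Ico.succ_top (by omega)]; congr 1; omega
  have hp : ((List.Ico 2 (2 + m)).map (fun j => ExteriorAlgebra.ι R (α j))).prod *
      ExteriorAlgebra.ι R (α (2 + m)) = ExteriorAlgebra.ι R (α 1) *
      ((List.Ico 3 (2 + m + 1)).map (fun j => ExteriorAlgebra.ι R (α j))).prod := by
    have : ((List.Ico 2 (2 + m)).map (fun j => ExteriorAlgebra.ι R (α j))).prod *
      ExteriorAlgebra.ι R (α (2 + m)) =
        ((List.Ico 2 (2 + m + 1)).map (fun j => ExteriorAlgebra.ι R (α j))).prod := by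
      rw [List.Ico.succ_top (by omega)]; simp
    rw [this, List.Ico.eq_cons (by omega), List.map_cons, List.prod_cons, h5, map_add, add_mul,
      map_sum, Finset.sum_mul, Finset.sum_eq_zero, add_zero]
    intro k hk
    rw [Finset.mem_Icc] at hk
    rw [map_smul, smul_mul_assoc, aux_mul_prod_zero, smul_zero]
    rw [List.Ico.mem]; omega
  rw [hs, List.foldr_append, List.foldr_cons, List.foldr_nil, aux_fold_comm,
    aux_fold d p q α m (fun i j _ _ _ _ => h0 i j (by omega) (by omega) (by omega) (by omega))
      h1 (fun i j _ _ _ _ => h2 i j (by omega) (by omega) (by omega) (by omega)), h4, hp,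
    aux_contr_mul, h3 1 (by omega) (by omega), List.Ico.length]
  · obtain ⟨r, rfl⟩ : ∃ r, m = r + 1 := ⟨m - 1, by omega⟩
    have e2 : 2 + (r + 1) + 1 = 3 + (r + 1) := by omega
    have e3 : Finset.Icc 3 (2 + (r + 1)) = Finset.Ico 3 (3 + (r + 1)) := by
      ext x; simp; omega
    rw [e2, aux_contr_prod, e3, smul_sub, smul_smul, sub_eq_add_neg]
    congr 1
    · congr 2
      rw [Nat.add_sub_cancel_left, pow_add]; ring
    · rw [Finset.mul_sum, Finset.smul_sum, ← Finset.sum_neg_distrib]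
      refine Finset.sum_congr rfl fun j hj => ?_
      rw [Finset.mem_Ico] at hj
      rw [h3 j (by omega) (by omega), mul_smul_comm, smul_smul, ← neg_smul]
      congr 1
      rw [Nat.add_sub_cancel_left]
      ring
  · intro i hi hi'
    rw [h4, ← mul_one (ExteriorAlgebra.ι R _), aux_contr_mul, aux_contr_one,
      h2 i _ hi hi' (by omega) le_rfl]
    simp

end GenericAux

theorem aux_Z_inl (n j : ℕ) (h : 2 ≤ j ∧ j ≤ n) : flagZ n j = X (Sum.inl ⟨j, h⟩) := dif_pos h

theorem aux_Zh_inr (n j : ℕ) (h : 2 ≤ j ∧ j ≤ n - 1) : flagZh n j = X (Sum.inr ⟨j, h⟩) :=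
  dif_pos h

theorem aux_V_Z (n i j : ℕ) (hi : i < n - 1) (h : 2 ≤ j ∧ j ≤ n) :
    flagV n i (flagZ n j) = if j = i + 1 then flagZ n j else 0 := by
  rw [flagV, if_neg (by omega), aux_Z_inl n j h, mkDerivation_X]
  simp only [aux_Z_inl n j h]

theorem aux_V_Zh (n i j : ℕ) (hi : i < n - 1) (h : 2 ≤ j ∧ j ≤ n - 1) :
    flagV n i (flagZh n j) = if j = i + 1 then -flagZh n j else 0 := by
  rw [flagV, if_neg (by omega), aux_Zh_inr n j h, mkDerivation_X]
  simp only [aux_Zh_inr n j h]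

theorem aux_VE_Z (n j : ℕ) (h : 2 ≤ j ∧ j ≤ n) :
    flagV n (n - 1) (flagZ n j) = if j = n then flagZ n j else 0 := by
  rw [flagV, if_pos rfl, aux_Z_inl n j h, mkDerivation_X]
  simp only [aux_Z_inl n j h]

theorem aux_VE_Zh (n j : ℕ) (h : 2 ≤ j ∧ j ≤ n - 1) :
    flagV n (n - 1) (flagZh n j) = flagZh n j := by
  rw [flagV, if_pos rfl, aux_Zh_inr n j h, mkDerivation_X]
  simp only [aux_Zh_inr n j h]

theorem aux_Zh_n (n : ℕ) (hn : 3 ≤ n) : flagZh n n = 1 := dif_neg (by omega)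

theorem aux_V_A (n i j : ℕ) (hn : 3 ≤ n) (hi : i < n - 1) (h : 2 ≤ j ∧ j ≤ n) :
    flagV n i (flagZ n j * flagZh n j) = 0 := by
  rw [Derivation.leibniz, aux_V_Z n i j hi h]
  rcases eq_or_lt_of_le h.2 with rfl | h'
  · rw [aux_Zh_n _ hn, if_neg (by omega)]; simp
  · rw [aux_V_Zh n i j hi ⟨h.1, by omega⟩]
    split_ifs
    · simp only [smul_eq_mul]; ring
    · simp

theorem aux_VE_A (n j : ℕ) (hn : 3 ≤ n) (h : 2 ≤ j ∧ j ≤ n) :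
    flagV n (n - 1) (flagZ n j * flagZh n j) = flagZ n j * flagZh n j := by
  rw [Derivation.leibniz, aux_VE_Z n j h]
  rcases eq_or_lt_of_le h.2 with rfl | h'
  · rw [aux_Zh_n _ hn, if_pos rfl]; simp
  · rw [aux_VE_Zh n j ⟨h.1, by omega⟩, if_neg (by omega)]
    simp

theorem aux_A_one (n : ℕ) : flagA n 1 =
    flagA n 2 + ∑ k ∈ Finset.Icc 3 n, (-1 : FlagR n) ^ k * flagA n k := by
  rw [flagA, if_pos rfl, flagA, if_neg (by omega)]
  congr 1
  refine Finset.sum_congr rfl fun k hk => ?_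
  rw [Finset.mem_Icc] at hk
  rw [flagA, if_neg (by omega)]

theorem aux_der_sign {B N : Type*} [CommRing B] [Algebra ℂ B] [AddCommGroup N] [Module ℂ N]
    [Module B N] (D : Derivation ℂ B N) (k : ℕ) (x : B) :
    D ((-1) ^ k * x) = (-1 : B) ^ k • D x := by
  rcases neg_one_pow_eq_or B k with h | h <;> rw [h] <;> simp

theorem aux_A_ne (n j : ℕ) (h : 2 ≤ j) : flagA n j = flagZ n j * flagZh n j :=
  if_neg (by omega)

theorem aux_dual {A : Type} [CommRing A] [Algebra ℂ A] (V : Derivation ℂ A A) (x : A) :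
    (KaehlerDifferential.linearMapEquivDerivation ℂ A).symm V (KaehlerDifferential.D ℂ A x)
      = V x := by
  exact Derivation.liftKaehlerDifferential_comp_D V x

/-- Lemma 3.3:
`ι_{V₁}⋯ι_{V_{n−1}} Ω
 = (−1)^n A₁ dA₃∧⋯∧dA_n + ∑_{j=3}^n (−1)^{n+j} A_j dA₁∧dA₃∧⋯∧\widehat{dA_j}∧⋯∧dA_n`. -/
theorem flag_contraction_lemma (n : ℕ) (hn : 3 ≤ n) :
    (List.Ico 1 n).foldr (fun i ω => contrDer (flagV n i) ω) (flagOmega n) =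
      ((-1 : FlagR n) ^ n * flagA n 1) •
        (((List.Ico 3 (n + 1)).map (fun k =>
          ExteriorAlgebra.ι (FlagR n) (KaehlerDifferential.D ℂ (FlagR n) (flagA n k)))).prod)
      + ∑ j ∈ Finset.Icc 3 n, ((-1 : FlagR n) ^ (n + j) * flagA n j) •
          (ExteriorAlgebra.ι (FlagR n) (KaehlerDifferential.D ℂ (FlagR n) (flagA n 1)) *
            (((List.Ico 3 (n + 1)).filter (fun k => k ≠ j)).map (fun k =>
              ExteriorAlgebra.ι (FlagR n) (KaehlerDifferential.D ℂ (FlagR n) (flagA n k)))).prod) := by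
  unfold flagOmega contrDer
  refine aux_main n hn
    (fun i => (KaehlerDifferential.linearMapEquivDerivation ℂ (FlagR n)).symm (flagV n i))
    (fun j => KaehlerDifferential.D ℂ (FlagR n) (flagZ n j))
    (fun j => KaehlerDifferential.D ℂ (FlagR n) (flagZh n j))
    (fun j => KaehlerDifferential.D ℂ (FlagR n) (flagA n j))
    (flagA n) ?_ ?_ ?_ ?_ ?_ ?_
  · intro i j _ hi hj hj' hne
    simp only [aux_dual]
    rw [aux_V_Z n i j hi ⟨hj, by omega⟩, aux_V_Zh n i j hi ⟨hj, by omega⟩, if_neg hne, if_neg hne]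
    exact ⟨rfl, rfl⟩
  · intro i h1 hi
    simp only [aux_dual]
    rw [aux_V_Z n i (i + 1) hi ⟨by omega, by omega⟩,
      aux_V_Zh n i (i + 1) hi ⟨by omega, by omega⟩, if_pos rfl, if_pos rfl,
      aux_A_ne n (i + 1) (by omega), Derivation.leibniz, neg_smul, sub_neg_eq_add]
  · intro i j _ hi hj hj'
    simp only [aux_dual]
    rw [aux_A_ne n j hj, aux_V_A n i j hn hi ⟨hj, hj'⟩]
  · intro j hj hj'
    simp only [aux_dual]
    have key : ∀ k, 2 ≤ k → k ≤ n → flagV n (n - 1) (flagA n k) = flagA n k := by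
      intro k hk hk'
      rw [aux_A_ne n k hk, aux_VE_A n k hn ⟨hk, hk'⟩]
    rcases eq_or_lt_of_le hj with rfl | hj
    · rw [aux_A_one, map_add, map_sum, key 2 le_rfl (by omega)]
      congr 1
      refine Finset.sum_congr rfl fun k hk => ?_
      rw [Finset.mem_Icc] at hk
      rw [aux_der_sign, key k (by omega) hk.2, smul_eq_mul]
    · exact key j hj hj'
  · rw [aux_A_ne n n (by omega), aux_Zh_n n hn, mul_one]
  · rw [aux_A_one, map_add, map_sum]
    congr 1
    refine Finset.sum_congr rfl fun k _ => ?_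
    rw [aux_der_sign]

end
end

section
/- Let n ≥ 3 and set f₁ = A₁/A₃ and f_j = A_{j+2}/A₃ for 2 ≤ j ≤ n−2, elements of K = Frac(R). Then ι_{V₁}ι_{V₂}⋯ι_{V_{n−1}} ( (A₁A₃A₄⋯A_n)^{−1} Ω ) = (−1)^{n−1} dlog f₁ ∧ dlog f₂ ∧ ⋯ ∧ dlog f_{n−2} in ⋀^{n−2}_K Ω_{K/ℂ}, i.e. the contraction of the meromorphic volume form with simple poles along the Schubert anticanonical divisor equals (−1)^{n−1} dlog(A₁/A₃) ∧ dlog(A₄/A₃) ∧ dlog(A₅/A₃) ∧ ⋯ ∧ dlog(A_n/A₃). (This is Proposition 3.4 of the paper.) -/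
/-!
Proposition 3.4 of the paper: contraction of the meromorphic volume form with
simple poles along the Schubert anticanonical divisor of the two-step flag
variety `Fℓ_{1,n−1;n}` equals
`(−1)^{n−1} dlog(A₁/A₃) ∧ dlog(A₄/A₃) ∧ ⋯ ∧ dlog(A_n/A₃)`.
-/

set_option synthInstance.maxHeartbeats 1000000
set_option maxHeartbeats 1000000

noncomputable section

open MvPolynomial

/-- The fraction field `K = Frac(R)`. -/
abbrev FlagK (n : ℕ) := FractionRing (FlagR n)

/-- `dlog f = f⁻¹ df ∈ Ω_{K/ℂ}`. -/
def dlog (n : ℕ) (f : FlagK n) : Ω[FlagK n⁄ℂ] :=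
  f⁻¹ • KaehlerDifferential.D ℂ (FlagK n) f

/-- The image of `A_j` in `K`. -/
def flagAK (n j : ℕ) : FlagK n := algebraMap (FlagR n) (FlagK n) (flagA n j)

/-- `Ω = dz₂∧dẑ₂∧⋯∧dz_{n−1}∧dẑ_{n−1}∧dz_n`, viewed in `⋀_K Ω_{K/ℂ}`. -/
def flagOmegaK (n : ℕ) : ExteriorAlgebra (FlagK n) (Ω[FlagK n⁄ℂ]) :=
  (((List.Ico 2 n).map (fun j =>
      ExteriorAlgebra.ι (FlagK n)
        (KaehlerDifferential.D ℂ (FlagK n) (algebraMap (FlagR n) (FlagK n) (flagZ n j))) *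
      ExteriorAlgebra.ι (FlagK n)
        (KaehlerDifferential.D ℂ (FlagK n) (algebraMap (FlagR n) (FlagK n) (flagZh n j))))).prod) *
    ExteriorAlgebra.ι (FlagK n)
      (KaehlerDifferential.D ℂ (FlagK n) (algebraMap (FlagR n) (FlagK n) (flagZ n n)))

section Abstract

open CliffordAlgebra

variable {K M : Type} [Field K] [AddCommGroup M] [Module K M]

lemma ctr_anti (d : ℕ → Module.Dual K M) (e : Module.Dual K M) (l : List ℕ)
    (x : ExteriorAlgebra K M) :
    l.foldr (fun i ω => contractLeft (Q := (0 : QuadraticForm K M)) (d i) ω)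
      (contractLeft (Q := (0 : QuadraticForm K M)) e x) =
    ((-1 : K) ^ l.length) • contractLeft (Q := (0 : QuadraticForm K M)) e
      (l.foldr (fun i ω => contractLeft (Q := (0 : QuadraticForm K M)) (d i) ω) x) := by
  induction l with
  | nil => simp
  | cons i l ih =>
    simp only [List.foldr_cons, List.length_cons]
    rw [ih, map_smul, contractLeft_comm, pow_succ, mul_neg_one, neg_smul, smul_neg]

lemma ctr_ι_mul (e : Module.Dual K M) (a : M) (x : ExteriorAlgebra K M) :
    contractLeft (Q := (0 : QuadraticForm K M)) e (ExteriorAlgebra.ι K a * x) =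
      e a • x - ExteriorAlgebra.ι K a * contractLeft (Q := (0 : QuadraticForm K M)) e x :=
  contractLeft_ι_mul e a x

lemma ctr_pass (d : ℕ → Module.Dual K M) (l : List ℕ) (a b : M)
    (ha : ∀ i ∈ l, d i a = 0) (hb : ∀ i ∈ l, d i b = 0) (x : ExteriorAlgebra K M) :
    l.foldr (fun i ω => contractLeft (Q := (0 : QuadraticForm K M)) (d i) ω)
      (ExteriorAlgebra.ι K a * (ExteriorAlgebra.ι K b * x)) =
    ExteriorAlgebra.ι K a * (ExteriorAlgebra.ι K b *
      (l.foldr (fun i ω => contractLeft (Q := (0 : QuadraticForm K M)) (d i) ω) x)) := by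
  induction l with
  | nil => rfl
  | cons i l ih =>
    simp only [List.foldr_cons]
    rw [ih (fun j hj => ha j (List.mem_cons_of_mem _ hj))
      (fun j hj => hb j (List.mem_cons_of_mem _ hj)), ctr_ι_mul, ctr_ι_mul,
      ha i List.mem_cons_self, hb i List.mem_cons_self]
    simp

lemma ctr_kill (e : Module.Dual K M) (c : ℕ → M) (l : List ℕ) (y : ExteriorAlgebra K M)
    (hc : ∀ i ∈ l, e (c i) = 0) (hy : contractLeft (Q := (0 : QuadraticForm K M)) e y = 0) :
    contractLeft (Q := (0 : QuadraticForm K M)) e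
      ((l.map fun i => ExteriorAlgebra.ι K (c i)).prod * y) = 0 := by
  induction l with
  | nil => simpa using hy
  | cons i l ih =>
    rw [List.map_cons, List.prod_cons, mul_assoc, ctr_ι_mul,
      ih (fun j hj => hc j (List.mem_cons_of_mem _ hj)), hc i List.mem_cons_self]
    simp

lemma ctr_pairs (d : ℕ → Module.Dual K M) (a b c : ℕ → M) (l : List ℕ) (hl : l.Nodup)
    (y : ExteriorAlgebra K M)
    (ha : ∀ i ∈ l, ∀ j ∈ l, i ≠ j → d i (a j) = 0)
    (hb : ∀ i ∈ l, ∀ j ∈ l, i ≠ j → d i (b j) = 0)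
    (hc' : ∀ i ∈ l, ∀ j ∈ l, i ≠ j → d i (c j) = 0)
    (hc : ∀ i ∈ l, d i (a i) • b i - d i (b i) • a i = c i)
    (hy : ∀ i ∈ l, contractLeft (Q := (0 : QuadraticForm K M)) (d i) y = 0) :
    l.foldr (fun i ω => contractLeft (Q := (0 : QuadraticForm K M)) (d i) ω)
      ((l.map fun i => ExteriorAlgebra.ι K (a i) * ExteriorAlgebra.ι K (b i)).prod * y) =
    (l.map fun i => ExteriorAlgebra.ι K (c i)).prod * y := by
  induction l with
  | nil => simp
  | cons i l ih =>
    rw [List.nodup_cons] at hl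
    have hne : ∀ j ∈ l, j ≠ i := fun j hj h => hl.1 (h ▸ hj)
    simp only [List.foldr_cons, List.map_cons, List.prod_cons, mul_assoc]
    rw [ctr_pass, ih hl.2, ctr_ι_mul, ctr_ι_mul, ctr_kill]
    · rw [← hc i List.mem_cons_self, map_sub, map_smul, map_smul]
      simp only [mul_zero, sub_zero, mul_smul_comm, sub_mul, smul_mul_assoc]
    · intro j hj
      exact hc' i List.mem_cons_self j (List.mem_cons_of_mem _ hj) (hne j hj).symm
    · exact hy i List.mem_cons_self
    · exact fun p hp q hq => ha p (List.mem_cons_of_mem _ hp) q (List.mem_cons_of_mem _ hq)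
    · exact fun p hp q hq => hb p (List.mem_cons_of_mem _ hp) q (List.mem_cons_of_mem _ hq)
    · exact fun p hp q hq => hc' p (List.mem_cons_of_mem _ hp) q (List.mem_cons_of_mem _ hq)
    · exact fun p hp => hc p (List.mem_cons_of_mem _ hp)
    · exact fun p hp => hy p (List.mem_cons_of_mem _ hp)
    · exact fun j hj => ha j (List.mem_cons_of_mem _ hj) i List.mem_cons_self (hne j hj)
    · exact fun j hj => hb j (List.mem_cons_of_mem _ hj) i List.mem_cons_self (hne j hj)

lemma ext_swap (x y : M) (P : ExteriorAlgebra K M) :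
    ExteriorAlgebra.ι K x * (ExteriorAlgebra.ι K y * P) =
      -(ExteriorAlgebra.ι K y * (ExteriorAlgebra.ι K x * P)) := by
  rw [← mul_assoc, ← mul_assoc, ← neg_mul,
    eq_neg_of_add_eq_zero_left (ExteriorAlgebra.ι_add_mul_swap (R := K) x y)]

lemma ext_mem (c : ℕ → M) (l : List ℕ) (k : ℕ) (hk : k ∈ l) :
    ExteriorAlgebra.ι K (c k) * (l.map fun i => ExteriorAlgebra.ι K (c i)).prod = 0 := by
  induction l with
  | nil => simp at hk
  | cons i l ih =>
    rw [List.map_cons, List.prod_cons]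
    rcases List.mem_cons.1 hk with rfl | h
    · rw [← mul_assoc, ExteriorAlgebra.ι_sq_zero, zero_mul]
    · rw [ext_swap, ih h, mul_zero, neg_zero]

lemma ext_shift (u : M) (x : ℕ → M) (l : List ℕ) :
    ExteriorAlgebra.ι K u * (l.map fun i => ExteriorAlgebra.ι K (x i)).prod =
    ExteriorAlgebra.ι K u * (l.map fun i => ExteriorAlgebra.ι K (x i - u)).prod := by
  induction l with
  | nil => rfl
  | cons i l ih =>
    simp only [List.map_cons, List.prod_cons]
    rw [ext_swap, ih, ← ext_swap, map_sub, sub_mul, mul_sub,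
      ← mul_assoc (ExteriorAlgebra.ι K u) (ExteriorAlgebra.ι K u), ExteriorAlgebra.ι_sq_zero,
      zero_mul, sub_zero]

lemma ext_smul (s : ℕ → K) (x : ℕ → M) (l : List ℕ) :
    (l.map fun i => ExteriorAlgebra.ι K (s i • x i)).prod =
    (l.map s).prod • (l.map fun i => ExteriorAlgebra.ι K (x i)).prod := by
  induction l with
  | nil => simp
  | cons i l ih =>
    simp only [List.map_cons, List.prod_cons]
    rw [ih, map_smul, smul_mul_smul_comm]

/-- The Euler contraction. -/
lemma ctr_euler (e : Module.Dual K M) (x1 x3 : M) (x : ℕ → M) (l : List ℕ)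
    (h3 : e x3 = 1) (h1 : e x1 = 1) (h : ∀ i ∈ l, e (x i) = 1) :
    contractLeft (Q := (0 : QuadraticForm K M)) e
      (ExteriorAlgebra.ι K x1 * (ExteriorAlgebra.ι K x3 *
        (l.map fun i => ExteriorAlgebra.ι K (x i)).prod)) =
    -(ExteriorAlgebra.ι K (x1 - x3) * (l.map fun i => ExteriorAlgebra.ι K (x i - x3)).prod) := by
  have hk : contractLeft (Q := (0 : QuadraticForm K M)) e
      (l.map fun i => ExteriorAlgebra.ι K (x i - x3)).prod = 0 := by
    have := ctr_kill e (fun i => x i - x3) l 1 (fun i hi => by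
      rw [map_sub, h i hi, h3, sub_self]) (by simp)
    simpa using this
  have hz : ExteriorAlgebra.ι K x1 * (ExteriorAlgebra.ι K x3 *
        (l.map fun i => ExteriorAlgebra.ι K (x i)).prod) =
      -(ExteriorAlgebra.ι K x3 * (ExteriorAlgebra.ι K (x1 - x3) *
        (l.map fun i => ExteriorAlgebra.ι K (x i - x3)).prod)) := by
    rw [ext_shift, ext_swap, map_sub, sub_mul, mul_sub,
      ← mul_assoc (ExteriorAlgebra.ι K x3) (ExteriorAlgebra.ι K x3), ExteriorAlgebra.ι_sq_zero,
      zero_mul, sub_zero]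
  have h13 : e (x1 - x3) = 0 := by rw [map_sub, h1, h3, sub_self]
  rw [hz, map_neg, ctr_ι_mul, ctr_ι_mul, hk, h3, h13]
  simp

end Abstract

lemma flagZ_of {n j : ℕ} (h : 2 ≤ j ∧ j ≤ n) : flagZ n j = X (Sum.inl ⟨j, h⟩) := dif_pos h
lemma flagZh_of {n j : ℕ} (h : 2 ≤ j ∧ j ≤ n - 1) : flagZh n j = X (Sum.inr ⟨j, h⟩) := dif_pos h
lemma flagZh_n {n : ℕ} (hn : 3 ≤ n) : flagZh n n = 1 := dif_neg (by omega)

lemma flagV_Z {n i j : ℕ} (hi : i ≠ n - 1) (h : 2 ≤ j ∧ j ≤ n) :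
    flagV n i (flagZ n j) = if j = i + 1 then flagZ n j else 0 := by
  conv_lhs => rw [flagZ_of h, flagV, if_neg hi, mkDerivation_X]

lemma flagV_Zh {n i j : ℕ} (hi : i ≠ n - 1) (h : 2 ≤ j ∧ j ≤ n - 1) :
    flagV n i (flagZh n j) = if j = i + 1 then -(flagZh n j) else 0 := by
  conv_lhs => rw [flagZh_of h, flagV, if_neg hi, mkDerivation_X]

lemma flagE_Z {n j : ℕ} (h : 2 ≤ j ∧ j ≤ n) :
    flagV n (n - 1) (flagZ n j) = if j = n then flagZ n j else 0 := by
  conv_lhs => rw [flagZ_of h, flagV, if_pos rfl, mkDerivation_X]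

lemma flagE_Zh {n j : ℕ} (h : 2 ≤ j ∧ j ≤ n - 1) :
    flagV n (n - 1) (flagZh n j) = flagZh n j := by
  conv_lhs => rw [flagZh_of h, flagV, if_pos rfl, mkDerivation_X]

lemma flagA_of {n j : ℕ} (h : 2 ≤ j) : flagA n j = flagZ n j * flagZh n j := if_neg (by omega)

lemma flagA_one (n : ℕ) :
    flagA n 1 = flagA n 2 + ∑ k ∈ Finset.Icc 3 n, (-1 : ℂ) ^ k • flagA n k := by
  rw [flagA_of le_rfl, flagA, if_pos rfl]
  congr 1
  refine Finset.sum_congr rfl fun k hk => ?_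
  rw [flagA_of (by have := (Finset.mem_Icc.1 hk).1; omega), MvPolynomial.smul_eq_C_mul]
  simp

lemma flagE_A {n j : ℕ} (hn : 3 ≤ n) (h : 2 ≤ j ∧ j ≤ n) :
    flagV n (n - 1) (flagA n j) = flagA n j := by
  rw [flagA_of h.1, Derivation.leibniz, flagE_Z h, smul_eq_mul, smul_eq_mul]
  by_cases hj : j = n
  · subst hj
    rw [if_pos rfl, flagZh_n hn, Derivation.map_one_eq_zero]; ring
  · rw [if_neg hj, flagE_Zh (by omega)]; ring

lemma flagE_A1 {n : ℕ} (hn : 3 ≤ n) : flagV n (n - 1) (flagA n 1) = flagA n 1 := by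
  rw [flagA_one, map_add, map_sum, flagE_A hn (by omega)]
  congr 1
  refine Finset.sum_congr rfl fun k hk => ?_
  have := Finset.mem_Icc.1 hk
  rw [Derivation.map_smul, flagE_A hn (by omega)]

lemma flagA_ne {n j : ℕ} (h : 2 ≤ j ∧ j ≤ n) : flagA n j ≠ 0 := by
  rw [flagA_of h.1, flagZ_of h]
  refine mul_ne_zero (X_ne_zero _) ?_
  unfold flagZh
  split_ifs
  · exact X_ne_zero _
  · exact one_ne_zero

lemma flagA1_ne {n : ℕ} (hn : 3 ≤ n) : flagA n 1 ≠ 0 := by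
  intro h0
  have := congrArg (MvPolynomial.eval (fun s : FlagIdx n => match s with
      | Sum.inl ⟨j, _⟩ => if j = 2 then (1 : ℂ) else 0
      | Sum.inr ⟨_, _⟩ => 1)) h0
  rw [flagA_one, map_add, map_sum, Finset.sum_eq_zero] at this
  · rw [flagA_of le_rfl, flagZ_of (by omega), flagZh_of (by omega)] at this
    simp at this
  · intro k hk
    have hk' := Finset.mem_Icc.1 hk
    rw [flagA_of (by omega), flagZ_of (by omega), MvPolynomial.smul_eval, map_mul, eval_X]
    simp only
    rw [if_neg (by omega)]
    simp

lemma dlog_div (n : ℕ) {f g : FlagK n} (hf : f ≠ 0) (hg : g ≠ 0) :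
    dlog n (f / g) = dlog n f - dlog n g := by
  unfold dlog
  have h1 : KaehlerDifferential.D ℂ (FlagK n) f =
      (f / g) • KaehlerDifferential.D ℂ (FlagK n) g +
        g • KaehlerDifferential.D ℂ (FlagK n) (f / g) := by
    rw [← Derivation.leibniz, div_mul_cancel₀ _ hg]
  rw [h1, smul_add, smul_smul, smul_smul, inv_div]
  have e1 : f⁻¹ * (f / g) = g⁻¹ := by field_simp
  have e2 : f⁻¹ * g = g / f := by field_simp
  rw [e1, e2, add_sub_cancel_left]

lemma fn_D {n : ℕ} (V : Derivation ℂ (FlagK n) (FlagK n)) (f : FlagK n) :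
    (KaehlerDifferential.linearMapEquivDerivation ℂ (FlagK n)).symm V
      (KaehlerDifferential.D ℂ (FlagK n) f) = V f :=
  Derivation.liftKaehlerDifferential_comp_D V f

/-- Proposition 3.4: with `f₁ = A₁/A₃` and `f_j = A_{j+2}/A₃` for `2 ≤ j ≤ n−2`,
`ι_{V₁}⋯ι_{V_{n−1}} ((A₁A₃A₄⋯A_n)⁻¹ Ω) = (−1)^{n−1} dlog f₁ ∧ ⋯ ∧ dlog f_{n−2}`,
where the `ι_{V_i}` are the (unique) extensions of the derivations `V_i` to `K`. -/
theorem flag_schubert_contraction (n : ℕ) (hn : 3 ≤ n)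
    (W : ℕ → Derivation ℂ (FlagK n) (FlagK n))
    (hW : ∀ i, ∀ g : FlagR n,
      W i (algebraMap (FlagR n) (FlagK n) g) = algebraMap (FlagR n) (FlagK n) (flagV n i g)) :
    (List.Ico 1 n).foldr (fun i ω => contrDer (W i) ω)
        (((flagAK n 1 * ∏ k ∈ Finset.Icc 3 n, flagAK n k)⁻¹) • flagOmegaK n) =
      ((-1 : FlagK n) ^ (n - 1)) •
        (ExteriorAlgebra.ι (FlagK n) (dlog n (flagAK n 1 / flagAK n 3)) *
          (((List.Ico 4 (n + 1)).map (fun k =>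
            ExteriorAlgebra.ι (FlagK n) (dlog n (flagAK n k / flagAK n 3)))).prod)) := by
  classical
  set d : ℕ → Module.Dual (FlagK n) (Ω[FlagK n⁄ℂ]) := fun i =>
    (KaehlerDifferential.linearMapEquivDerivation ℂ (FlagK n)).symm (W i) with hd
  have hdD : ∀ i (g : FlagR n), d i (KaehlerDifferential.D ℂ (FlagK n)
      (algebraMap (FlagR n) (FlagK n) g)) = algebraMap (FlagR n) (FlagK n) (flagV n i g) :=
    fun i g => (fn_D (W i) _).trans (hW i g)
  have hne : ∀ k, 2 ≤ k ∧ k ≤ n → flagAK n k ≠ 0 := fun k hk h =>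
    flagA_ne hk ((IsFractionRing.injective (FlagR n) (FlagK n)) (h.trans (map_zero _).symm))
  have hne1 : flagAK n 1 ≠ 0 := fun h =>
    flagA1_ne hn ((IsFractionRing.injective (FlagR n) (FlagK n)) (h.trans (map_zero _).symm))
  set DA : ℕ → Ω[FlagK n⁄ℂ] := fun j => KaehlerDifferential.D ℂ (FlagK n) (flagAK n j) with hDA
  -- Euler
  have hE : ∀ k, 2 ≤ k ∧ k ≤ n → d (n - 1) (dlog n (flagAK n k)) = 1 := fun k hk => by
    unfold dlog
    rw [map_smul, flagAK, hdD, flagE_A hn hk, smul_eq_mul]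
    exact inv_mul_cancel₀ (hne k hk)
  have hE1 : d (n - 1) (dlog n (flagAK n 1)) = 1 := by
    unfold dlog
    rw [map_smul, flagAK, hdD, flagE_A1 hn, smul_eq_mul]
    exact inv_mul_cancel₀ hne1
  -- pairs
  have hpairs : (List.Ico 1 (n - 1)).foldr
      (fun i ω => CliffordAlgebra.contractLeft
        (Q := (0 : QuadraticForm (FlagK n) (Ω[FlagK n⁄ℂ]))) (d i) ω) (flagOmegaK n) =
      ((List.Ico 1 (n - 1)).map fun i => ExteriorAlgebra.ι (FlagK n) (DA (i + 1))).prod *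
        ExteriorAlgebra.ι (FlagK n) (DA n) := by
    have hico : List.Ico 2 n = (List.Ico 1 (n - 1)).map (fun i => i + 1) := by
      have h := List.Ico.map_add 1 (n - 1) 1
      rw [show n - 1 + 1 = n by omega] at h
      rw [show (fun i : ℕ => i + 1) = (fun i => 1 + i) from funext fun i => add_comm _ _]
      exact h.symm
    have hA2 : ∀ j, 2 ≤ j → DA j =
        algebraMap (FlagR n) (FlagK n) (flagZ n j) • KaehlerDifferential.D ℂ (FlagK n)
          (algebraMap (FlagR n) (FlagK n) (flagZh n j)) +
        algebraMap (FlagR n) (FlagK n) (flagZh n j) • KaehlerDifferential.D ℂ (FlagK n)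
          (algebraMap (FlagR n) (FlagK n) (flagZ n j)) := fun j hj => by
      simp only [hDA]
      rw [flagAK, flagA_of hj, map_mul, Derivation.leibniz]
    have hn' : KaehlerDifferential.D ℂ (FlagK n) (algebraMap (FlagR n) (FlagK n) (flagZ n n))
        = DA n := by
      simp only [hDA]
      rw [flagAK, flagA_of (by omega), flagZh_n hn, mul_one]
    unfold flagOmegaK
    rw [hico, List.map_map, hn']
    have mem : ∀ i ∈ List.Ico 1 (n - 1), 1 ≤ i ∧ i < n - 1 := fun i hi => List.Ico.mem.1 hi
    have hz : ∀ i ∈ List.Ico 1 (n - 1), ∀ j, 2 ≤ j + 1 ∧ j + 1 ≤ n → i ≠ j →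
        d i (KaehlerDifferential.D ℂ (FlagK n)
          (algebraMap (FlagR n) (FlagK n) (flagZ n (j + 1)))) = 0 := fun i hi j hj hij => by
      have := mem i hi
      rw [hdD, flagV_Z (by omega) hj, if_neg (by omega), map_zero]
    have hzh : ∀ i ∈ List.Ico 1 (n - 1), ∀ j ∈ List.Ico 1 (n - 1), i ≠ j →
        d i (KaehlerDifferential.D ℂ (FlagK n)
          (algebraMap (FlagR n) (FlagK n) (flagZh n (j + 1)))) = 0 := fun i hi j hj hij => by
      have := mem i hi
      have := mem j hj
      rw [hdD, flagV_Zh (by omega) (by omega), if_neg (by omega), map_zero]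
    refine ctr_pairs d
      (fun i => KaehlerDifferential.D ℂ (FlagK n)
        (algebraMap (FlagR n) (FlagK n) (flagZ n (i + 1))))
      (fun i => KaehlerDifferential.D ℂ (FlagK n)
        (algebraMap (FlagR n) (FlagK n) (flagZh n (i + 1))))
      (fun i => DA (i + 1)) (List.Ico 1 (n - 1)) (List.Ico.nodup _ _) _ ?_ hzh ?_ ?_ ?_
    · intro i hi j hj hij
      have := mem j hj
      exact hz i hi j (by omega) hij
    · intro i hi j hj hij
      have := mem j hj
      rw [hA2 _ (by omega), map_add, map_smul, map_smul, hz i hi j (by omega) hij,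
        hzh i hi j hj hij, smul_zero, smul_zero, add_zero]
    · intro i hi
      have := mem i hi
      rw [hA2 _ (by omega), hdD, hdD, flagV_Z (by omega) (by omega), if_pos rfl,
        flagV_Zh (by omega) (by omega), if_pos rfl, map_neg, neg_smul, sub_neg_eq_add]
    · intro i hi
      have := mem i hi
      rw [← hn', ← mul_one (ExteriorAlgebra.ι (FlagK n) _), ctr_ι_mul]
      have := hz i hi (n - 1) (by omega) (by omega)
      rw [show n - 1 + 1 = n by omega] at this
      rw [this]
      simp
  -- replace A₂ by A₁
  have hprod : ((List.Ico 1 (n - 1)).map fun i => ExteriorAlgebra.ι (FlagK n) (DA (i + 1))).prod *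
        ExteriorAlgebra.ι (FlagK n) (DA n) =
      ExteriorAlgebra.ι (FlagK n) (DA 1) *
        ((List.Ico 3 (n + 1)).map fun i => ExteriorAlgebra.ι (FlagK n) (DA i)).prod := by
    have h1 : ((List.Ico 1 (n - 1)).map fun i =>
        ExteriorAlgebra.ι (FlagK n) (DA (i + 1))).prod * ExteriorAlgebra.ι (FlagK n) (DA n) =
        ((List.Ico 2 (n + 1)).map fun i => ExteriorAlgebra.ι (FlagK n) (DA i)).prod := by
      have h := List.Ico.map_add 1 (n - 1) 1
      rw [show n - 1 + 1 = n by omega] at h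
      rw [List.Ico.succ_top (by omega : 2 ≤ n), List.map_append, List.prod_append, ← h,
        List.map_map]
      simp only [List.map_cons, List.map_nil, List.prod_cons, List.prod_nil, mul_one,
        Function.comp_def]
      simp only [add_comm 1]
    rw [h1, List.Ico.eq_cons (by omega : 2 < n + 1), List.map_cons, List.prod_cons]
    have hD1 : DA 1 = DA 2 + ∑ k ∈ Finset.Icc 3 n, (-1 : FlagK n) ^ k • DA k := by
      simp only [hDA]
      have : flagAK n 1 = flagAK n 2 + ∑ k ∈ Finset.Icc 3 n, (-1 : ℂ) ^ k • flagAK n k := by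
        rw [flagAK, flagA_one, map_add, map_sum]
        congr 1
        refine Finset.sum_congr rfl fun k _ => ?_
        rw [Algebra.smul_def, map_mul, Algebra.smul_def]
        simp [flagAK]
      rw [this, map_add, map_sum]
      congr 1
      refine Finset.sum_congr rfl fun k _ => ?_
      rw [Derivation.map_smul, ← algebraMap_smul (FlagK n) ((-1 : ℂ) ^ k)]
      simp
    rw [hD1, map_add, add_mul, map_sum, Finset.sum_mul, Finset.sum_eq_zero, add_zero]
    intro k hk
    have := Finset.mem_Icc.1 hk
    rw [map_smul, smul_mul_assoc, ext_mem DA _ k (List.Ico.mem.2 (by omega)), smul_zero]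
  -- scale
  have hscale : ((flagAK n 1 * ∏ k ∈ Finset.Icc 3 n, flagAK n k)⁻¹) •
      (ExteriorAlgebra.ι (FlagK n) (DA 1) *
        ((List.Ico 3 (n + 1)).map fun i => ExteriorAlgebra.ι (FlagK n) (DA i)).prod) =
      ExteriorAlgebra.ι (FlagK n) (dlog n (flagAK n 1)) *
        ((List.Ico 3 (n + 1)).map fun i =>
          ExteriorAlgebra.ι (FlagK n) (dlog n (flagAK n i))).prod := by
    unfold dlog
    rw [ext_smul (fun i => (flagAK n i)⁻¹) DA, map_smul, smul_mul_smul_comm, mul_inv]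
    congr 2
    rw [← Finset.prod_inv_distrib, Finset.prod_eq_multiset_prod]
    rfl
  -- assemble
  have hlist : List.Ico 1 n = List.Ico 1 (n - 1) ++ [n - 1] := by
    have := List.Ico.succ_top (by omega : 1 ≤ n - 1)
    rwa [show n - 1 + 1 = n by omega] at this
  have hfold_smul : ∀ (s : FlagK n) (l : List ℕ) (x : ExteriorAlgebra (FlagK n) (Ω[FlagK n⁄ℂ])),
      l.foldr (fun i ω => CliffordAlgebra.contractLeft
        (Q := (0 : QuadraticForm (FlagK n) (Ω[FlagK n⁄ℂ]))) (d i) ω) (s • x) =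
      s • l.foldr (fun i ω => CliffordAlgebra.contractLeft
        (Q := (0 : QuadraticForm (FlagK n) (Ω[FlagK n⁄ℂ]))) (d i) ω) x := by
    intro s l x
    induction l with
    | nil => rfl
    | cons i l ih => simp only [List.foldr_cons]; rw [ih, map_smul]
  change (List.Ico 1 n).foldr (fun i ω => CliffordAlgebra.contractLeft
        (Q := (0 : QuadraticForm (FlagK n) (Ω[FlagK n⁄ℂ]))) (d i) ω) _ = _
  rw [hlist, List.foldr_append, List.foldr_cons, List.foldr_nil, ctr_anti, hfold_smul, hpairs,
    hprod, hscale, List.Ico.eq_cons (by omega : 3 < n + 1), List.map_cons, List.prod_cons,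
    ctr_euler (d (n - 1)) _ _ (fun i => dlog n (flagAK n i)) _ (hE 3 (by omega)) hE1
      (fun i hi => hE i (by have := List.Ico.mem.1 hi; omega)),
    List.Ico.length, dlog_div n hne1 (hne 3 (by omega))]
  have hmap : ((List.Ico 4 (n + 1)).map fun k =>
      ExteriorAlgebra.ι (FlagK n) (dlog n (flagAK n k / flagAK n 3))) =
      (List.Ico 4 (n + 1)).map fun k =>
      ExteriorAlgebra.ι (FlagK n) (dlog n (flagAK n k) - dlog n (flagAK n 3)) := by
    refine List.map_congr_left fun k hk => ?_
    have := List.Ico.mem.1 hk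
    rw [dlog_div n (hne k (by omega)) (hne 3 (by omega))]
  rw [hmap]
  obtain ⟨m, rfl⟩ : ∃ m, n = m + 2 := ⟨n - 2, by omega⟩
  simp only [show m + 2 - 1 = m + 1 by omega, Nat.add_sub_cancel]
  rw [pow_succ, mul_neg_one, neg_smul, smul_neg]

end
end

section
/- Let m ≥ 2. With Ω = dz₂∧dz₃∧⋯∧dz_{2m+1} ∈ ⋀^{2m}_R Ω_{R/ℂ}, the iterated contraction satisfies ι_{V_{m+1}} ι_{V_m} ι_{V₁} ι_{V₂} ⋯ ι_{V_{m−1}} Ω = Σ_{j=1}^{m} (−1)^{m+j} A_j dA₁∧⋯∧dA_{j−1}∧dA_{j+1}∧⋯∧dA_m in ⋀^{m−1}_R Ω_{R/ℂ}. (This is Lemma 3.7 of the paper, the key contraction computation for the even-dimensional quadric Q_{2m}.) -/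
set_option synthInstance.maxHeartbeats 1000000
set_option maxHeartbeats 1000000

noncomputable section

open MvPolynomial

/-- The coordinate ring `R = ℂ[z₂, z₃, …, z_{2m+1}]` of the affine chart
`{x₀ ≠ 0}` of the even quadric `Q_{2m}`. -/
abbrev QevR (m : ℕ) := MvPolynomial {j : ℕ // 2 ≤ j ∧ j ≤ 2 * m + 1} ℂ

/-- The fraction field `K = Frac(R)`. -/
abbrev QevK (m : ℕ) := FractionRing (QevR m)

/-- The coordinate `z_j` for `2 ≤ j ≤ 2m+1`. -/
def qevZ (m j : ℕ) : QevR m :=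
  if h : 2 ≤ j ∧ j ≤ 2 * m + 1 then X ⟨j, h⟩ else 0

/-- `A_j = z_{2j} z_{2j+1}` for `1 ≤ j ≤ m`. -/
def qevA (m j : ℕ) : QevR m := qevZ m (2 * j) * qevZ m (2 * j + 1)

/-- `z₁ = −(z₂z₃ + z₄z₅ + ⋯ + z_{2m}z_{2m+1})` (the quadric relation solved
for `z₁`). -/
def qevZ1 (m : ℕ) : QevR m := -(∑ i ∈ Finset.Icc 1 m, qevA m i)

/-- The ℂ-derivations `V_j = z_{2j}∂/∂z_{2j} − z_{2j+1}∂/∂z_{2j+1}` for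
`1 ≤ j ≤ m−1`, `V_m = z_{2m}∂/∂z_{2m} + ∑_{i=1}^{m−1} z_{2i+1}∂/∂z_{2i+1}` and
`V_{m+1} = z_{2m+1}∂/∂z_{2m+1} + ∑_{i=1}^{m−1} z_{2i+1}∂/∂z_{2i+1}`. -/
def qevV (m i : ℕ) : Derivation ℂ (QevR m) (QevR m) :=
  if i = m then
    MvPolynomial.mkDerivation ℂ (fun s =>
      if s.1 = 2 * m then qevZ m s.1
      else if s.1 % 2 = 1 ∧ s.1 ≤ 2 * m - 1 then qevZ m s.1 else 0)
  else if i = m + 1 then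
    MvPolynomial.mkDerivation ℂ (fun s =>
      if s.1 = 2 * m + 1 then qevZ m s.1
      else if s.1 % 2 = 1 ∧ s.1 ≤ 2 * m - 1 then qevZ m s.1 else 0)
  else
    MvPolynomial.mkDerivation ℂ (fun s =>
      if s.1 = 2 * i then qevZ m s.1
      else if s.1 = 2 * i + 1 then -(qevZ m s.1) else 0)

/-- `Ω = dz₂∧dz₃∧⋯∧dz_{2m+1} ∈ ⋀^{2m}_R Ω_{R/ℂ}`. -/
def qevOmega (m : ℕ) : ExteriorAlgebra (QevR m) (Ω[QevR m⁄ℂ]) :=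
  (((List.Ico 2 (2 * m + 2)).map (fun j =>
    ExteriorAlgebra.ι (QevR m) (KaehlerDifferential.D ℂ (QevR m) (qevZ m j)))).prod)

section QevAbstract

variable {R : Type*} [CommRing R] {M : Type*} [AddCommGroup M] [Module R M]

/-- contraction, abbreviated -/
abbrev qc (d : Module.Dual R M) : ExteriorAlgebra R M →ₗ[R] ExteriorAlgebra R M :=
  CliffordAlgebra.contractLeft d

/-- the grade involution, abbreviated -/
abbrev qinv : ExteriorAlgebra R M →ₐ[R] ExteriorAlgebra R M :=
  CliffordAlgebra.involute

theorem qc_ι_mul (d : Module.Dual R M) (a : M) (b : ExteriorAlgebra R M) :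
    qc d (ExteriorAlgebra.ι R a * b) = d a • b - ExteriorAlgebra.ι R a * qc d b :=
  CliffordAlgebra.contractLeft_ι_mul d a b

theorem qc_ι (d : Module.Dual R M) (a : M) :
    qc d (ExteriorAlgebra.ι R a) = algebraMap R _ (d a) :=
  CliffordAlgebra.contractLeft_ι _ d a

theorem qinv_ι (a : M) :
    qinv (ExteriorAlgebra.ι R a) = - ExteriorAlgebra.ι R a :=
  CliffordAlgebra.involute_ι a

theorem qc_one (d : Module.Dual R M) : qc d (1 : ExteriorAlgebra R M) = 0 :=
  CliffordAlgebra.contractLeft_one _ d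

theorem qc_mul (d : Module.Dual R M) (a b : ExteriorAlgebra R M) :
    qc d (a * b) = qc d a * b + qinv a * qc d b := by
  induction a using CliffordAlgebra.left_induction generalizing b with
  | algebraMap r =>
    rw [CliffordAlgebra.contractLeft_algebraMap_mul, CliffordAlgebra.contractLeft_algebraMap,
      AlgHom.commutes, zero_mul, zero_add]
  | add x y hx hy => rw [add_mul, map_add, hx, hy, map_add, map_add, add_mul, add_mul]; abel
  | ι_mul x v hx =>
    rw [mul_assoc, CliffordAlgebra.contractLeft_ι_mul, hx, CliffordAlgebra.contractLeft_ι_mul,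
      map_mul, CliffordAlgebra.involute_ι, sub_mul, mul_add, smul_mul_assoc, mul_assoc, neg_mul,
      neg_mul, mul_assoc]
    abel

theorem qinv_qc (d : Module.Dual R M) (a : ExteriorAlgebra R M) :
    qinv (qc d a) = - qc d (qinv a) := by
  induction a using CliffordAlgebra.left_induction with
  | algebraMap r =>
    rw [CliffordAlgebra.contractLeft_algebraMap,
      AlgHom.commutes, CliffordAlgebra.contractLeft_algebraMap, map_zero, neg_zero]
  | add x y hx hy => rw [map_add, map_add, hx, hy, map_add, map_add, neg_add]
  | ι_mul x v hx =>
    rw [CliffordAlgebra.contractLeft_ι_mul, map_sub, map_mul, hx, map_mul,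
      CliffordAlgebra.involute_ι, neg_mul, neg_mul, LinearMap.map_neg,
      CliffordAlgebra.contractLeft_ι_mul, map_smul, mul_neg]
    abel

/-- product of a list of one-forms -/
def qprod (l : List ℕ) (a : ℕ → M) : ExteriorAlgebra R M :=
  (l.map (fun k => ExteriorAlgebra.ι R (a k))).prod

theorem qprod_nil (a : ℕ → M) : qprod (R := R) [] a = 1 := rfl

theorem qprod_cons (i : ℕ) (l : List ℕ) (a : ℕ → M) :
    qprod (R := R) (i :: l) a = ExteriorAlgebra.ι R (a i) * qprod l a := by
  simp [qprod]

theorem qprod_append (l l' : List ℕ) (a : ℕ → M) :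
    qprod (R := R) (l ++ l') a = qprod l a * qprod l' a := by
  simp [qprod]

theorem qprod_single (i : ℕ) (a : ℕ → M) :
    qprod (R := R) [i] a = ExteriorAlgebra.ι R (a i) := by
  simp [qprod]

theorem qinv_qprod (l : List ℕ) (a : ℕ → M) :
    qinv (qprod (R := R) l a) = (-1 : R) ^ l.length • qprod l a := by
  induction l with
  | nil => simp [qprod]
  | cons i l ih =>
    rw [qprod_cons, map_mul, ih, qinv_ι, List.length_cons, pow_succ]
    simp

theorem qc_qprod_zero (d : Module.Dual R M) (l : List ℕ) (a : ℕ → M)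
    (h : ∀ i ∈ l, d (a i) = 0) : qc d (qprod l a) = 0 := by
  induction l with
  | nil => exact qc_one d
  | cons i l ih =>
    rw [qprod_cons, qc_ι_mul, h i (by simp), ih (fun j hj => h j (by simp [hj]))]
    simp

theorem qc_qprod_congr (d d' : Module.Dual R M) (l : List ℕ) (a : ℕ → M)
    (h : ∀ i ∈ l, d (a i) = d' (a i)) : qc d (qprod l a) = qc d' (qprod l a) := by
  have := qc_qprod_zero (d - d') l a (by intro i hi; simp [h i hi])
  rw [qc, map_sub, LinearMap.sub_apply] at this
  exact sub_eq_zero.mp this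

/-- product of pairs -/
def qpair (l : List ℕ) (x y : ℕ → M) : ExteriorAlgebra R M :=
  (l.map (fun k => ExteriorAlgebra.ι R (x k) * ExteriorAlgebra.ι R (y k))).prod

theorem qpair_mul_qc (d : Module.Dual R M) (l : List ℕ) (x y : ℕ → M) (b : ExteriorAlgebra R M)
    (h : ∀ i ∈ l, d (x i) = 0 ∧ d (y i) = 0) :
    qc d (qpair l x y * b) = qpair l x y * qc d b := by
  induction l with
  | nil => simp [qpair]
  | cons i l ih =>
    have e : ∀ b, qpair (R := R) (i :: l) x y * b =
        ExteriorAlgebra.ι R (x i) * (ExteriorAlgebra.ι R (y i) * (qpair l x y * b)) := by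
      intro b; simp [qpair, mul_assoc]
    rw [e, qc_ι_mul, qc_ι_mul, (h i (by simp)).1, (h i (by simp)).2,
      ih (fun j hj => h j (by simp [hj])), e]
    simp

theorem qc_step1 (m : ℕ) (x y a : ℕ → M) (p q : ℕ → R) (d : ℕ → Module.Dual R M)
    (ha : ∀ i, a i = p i • y i + q i • x i)
    (hx : ∀ j, 1 ≤ j → j < m → ∀ i, 1 ≤ i → i ≤ m → d j (x i) = if i = j then p i else 0)
    (hy : ∀ j, 1 ≤ j → j < m → ∀ i, 1 ≤ i → i ≤ m → d j (y i) = if i = j then - q i else 0)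
    (n k : ℕ) (hk : 1 ≤ k) (hn : k + n = m) :
    (List.Ico k m).foldr (fun i ω => qc (d i) ω) (qpair (List.Ico 1 (m+1)) x y) =
      qpair (List.Ico 1 k) x y * (qprod (List.Ico k m) a *
        (ExteriorAlgebra.ι R (x m) * ExteriorAlgebra.ι R (y m))) := by
  induction n generalizing k with
  | zero =>
    obtain rfl : k = m := by omega
    rw [List.Ico.self_empty, List.Ico.succ_top hk]
    simp [qpair, qprod]
  | succ n ih =>
    have hkm : k < m := by omega
    rw [List.Ico.eq_cons hkm, List.foldr_cons, ih (k+1) (by omega) (by omega),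
      List.Ico.succ_top hk]
    have e : qpair (R := R) (List.Ico 1 k ++ [k]) x y = qpair (List.Ico 1 k) x y *
      (ExteriorAlgebra.ι R (x k) * ExteriorAlgebra.ι R (y k)) := by simp [qpair]
    rw [e, mul_assoc, qpair_mul_qc]
    · congr 1
      have hz : qc (d k) (qprod (List.Ico (k + 1) m) a *
        (ExteriorAlgebra.ι R (x m) * ExteriorAlgebra.ι R (y m))) = 0 := by
        rw [qc_mul, qc_qprod_zero, qc_ι_mul, qc_ι, hx k hk hkm m (by omega) le_rfl,
          hy k hk hkm m (by omega) le_rfl]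
        · simp [hkm.ne']
        · intro i hi
          rw [List.Ico.mem] at hi
          rw [ha, map_add, map_smul, map_smul, hx k hk hkm i (by omega) (by omega),
            hy k hk hkm i (by omega) (by omega), if_neg (by omega), if_neg (by omega)]
          simp
      rw [mul_assoc, qc_ι_mul, qc_ι_mul, hz, qprod_cons, ha, hx k hk hkm k hk hkm.le,
        hy k hk hkm k hk hkm.le, if_pos rfl, if_pos rfl]
      simp [add_mul, mul_assoc]
    · intro i hi
      rw [List.Ico.mem] at hi
      rw [hx k hk hkm i (by omega) (by omega),
            hy k hk hkm i (by omega) (by omega), if_neg (by omega), if_neg (by omega)]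
      simp

theorem qc_sum (d : Module.Dual R M) (a : ℕ → M) (m : ℕ) :
    qc d (qprod (List.Ico 1 (m+1)) a) = ∑ j ∈ Finset.Icc 1 m, ((-1 : R) ^ (j+1) * d (a j)) •
      qprod ((List.Ico 1 (m+1)).filter (fun k => k ≠ j)) a := by
  induction m with
  | zero => simp [qprod]
  | succ m ih =>
    rw [List.Ico.succ_top (by omega : 1 ≤ m + 1), qprod_append, qc_mul, ih,
      Finset.sum_Icc_succ_top (by omega), qprod_single, qc_ι, qinv_qprod, Finset.sum_mul]
    congr 1
    · refine Finset.sum_congr rfl fun j hj => ?_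
      rw [Finset.mem_Icc] at hj
      rw [List.filter_append, qprod_append, smul_mul_assoc]
      congr 2
      rw [List.filter_cons_of_pos (by simp; omega), List.filter_nil, qprod_single]
    · rw [List.filter_append, List.filter_cons_of_neg (by simp), List.filter_nil, List.append_nil,
        List.filter_eq_self.mpr, List.Ico.length, ← Algebra.commutes, ← Algebra.smul_def, smul_smul]
      · congr 1
        simp [pow_succ, mul_comm]
      · intro i hi
        rw [List.Ico.mem] at hi
        simp; omega

theorem qc_main (m : ℕ) (hm : 1 ≤ m) (x y a : ℕ → M) (p q : ℕ → R) (d : ℕ → Module.Dual R M)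
    (ha : ∀ i, a i = p i • y i + q i • x i)
    (hx : ∀ j, 1 ≤ j → j < m → ∀ i, 1 ≤ i → i ≤ m → d j (x i) = if i = j then p i else 0)
    (hy : ∀ j, 1 ≤ j → j < m → ∀ i, 1 ≤ i → i ≤ m → d j (y i) = if i = j then - q i else 0)
    (hx1 : ∀ i, 1 ≤ i → i ≤ m → d m (x i) = if i = m then p i else 0)
    (hy1 : ∀ i, 1 ≤ i → i ≤ m → d m (y i) = if i = m then 0 else q i)
    (hx2 : ∀ i, 1 ≤ i → i ≤ m → d (m+1) (x i) = 0)
    (hy2 : ∀ i, 1 ≤ i → i ≤ m → d (m+1) (y i) = q i) :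
    ((m + 1) :: m :: List.Ico 1 m).foldr (fun i ω => qc (d i) ω)
        (qpair (List.Ico 1 (m+1)) x y) =
      ∑ j ∈ Finset.Icc 1 m, ((-1 : R) ^ (m + j) * (p j * q j)) •
        qprod ((List.Ico 1 (m + 1)).filter (fun k => k ≠ j)) a := by
  rw [List.foldr_cons, List.foldr_cons, qc_step1 m x y a p q d ha hx hy (m-1) 1 le_rfl (by omega)]
  obtain ⟨n, rfl⟩ : ∃ n, m = n + 1 := ⟨m - 1, by omega⟩
  have e1 : qpair (R := R) (List.Ico 1 1) x y = 1 := by simp [qpair]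
  rw [e1, one_mul]
  have hA1 : ∀ i, 1 ≤ i → i < n + 1 → d (n+1) (a i) = p i * q i := by
    intro i h1 h2
    rw [ha, map_add, map_smul, map_smul, hx1 i h1 h2.le, hy1 i h1 h2.le, if_neg h2.ne, if_neg h2.ne]
    simp
  have hA2 : ∀ i, 1 ≤ i → i < n + 1 → d (n+1+1) (a i) = p i * q i := by
    intro i h1 h2
    rw [ha, map_add, map_smul, map_smul, hx2 i h1 h2.le, hy2 i h1 h2.le]
    simp
  set P : ExteriorAlgebra R M := qprod (List.Ico 1 (n+1)) a with hP
  have hc : qc (d (n+1+1)) P = qc (d (n+1)) P := by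
    apply qc_qprod_congr
    intro i hi
    rw [List.Ico.mem] at hi
    rw [hA1 i hi.1 hi.2, hA2 i hi.1 hi.2]
  have hinv : qinv P = (-1 : R)^n • P := by
    rw [hP, qinv_qprod, List.Ico.length]; simp
  have hS := qc_sum (d (n+1)) a n
  rw [← hP] at hS
  have hcc : qc (d (n+1+1)) (qc (d (n+1)) P) = 0 := by
    rw [← hc]; exact CliffordAlgebra.contractLeft_contractLeft _ _
  have hR : ∑ j ∈ Finset.Icc 1 (n+1), ((-1 : R) ^ (n + 1 + j) * (p j * q j)) •
        qprod ((List.Ico 1 (n + 1 + 1)).filter (fun k => k ≠ j)) a =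
      (-1 : R)^n • (qc (d (n+1)) P * ExteriorAlgebra.ι R (a (n+1))) +
        (p (n+1) * q (n+1)) • P := by
    rw [hS, Finset.sum_Icc_succ_top (by omega), Finset.sum_mul, Finset.smul_sum]
    congr 1
    · refine Finset.sum_congr rfl fun j hj => ?_
      rw [Finset.mem_Icc] at hj
      rw [List.Ico.succ_top (by omega : 1 ≤ n + 1), List.filter_append, qprod_append,
        smul_mul_assoc, smul_smul, hA1 j hj.1 (by omega)]
      congr 1
      · ring
      · congr 1
        rw [List.filter_cons_of_pos (by simp; omega), List.filter_nil, qprod_single]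
    · rw [List.Ico.succ_top (by omega : 1 ≤ n + 1), List.filter_append,
        List.filter_cons_of_neg (by simp), List.filter_nil, List.append_nil,
        List.filter_eq_self.mpr, ← hP]
      · congr 1
        rw [← two_mul, pow_mul]; simp
      · intro i hi
        rw [List.Ico.mem] at hi
        simp; omega
  rw [hR]
  have h1 : qc (d (n+1)) (ExteriorAlgebra.ι R (x (n+1)) * ExteriorAlgebra.ι R (y (n+1))) =
      p (n+1) • ExteriorAlgebra.ι R (y (n+1)) := by
    rw [qc_ι_mul, qc_ι, hx1 _ hm le_rfl, hy1 _ hm le_rfl]; simp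
  have h2 : qc (d (n+1+1)) (ExteriorAlgebra.ι R (x (n+1)) * ExteriorAlgebra.ι R (y (n+1))) =
      - (q (n+1) • ExteriorAlgebra.ι R (x (n+1))) := by
    rw [qc_ι_mul, qc_ι, hx2 _ hm le_rfl, hy2 _ hm le_rfl, ← Algebra.commutes,
      ← Algebra.smul_def]; simp
  have hs : ((-1 : R)^n * (-1 : R)^n) = 1 := by
    rw [← mul_pow]; simp
  rw [qc_mul, h1, map_add, qc_mul, hcc, h2, qinv_qc, hinv, smul_mul_assoc, map_smul, map_smul,
    qc_mul, hc, map_smul, qc_ι, hy2 _ hm le_rfl, hinv, ha, map_add, map_smul, map_smul,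
    Algebra.algebraMap_eq_smul_one]
  simp only [mul_add, smul_add, smul_smul, mul_smul_comm, smul_mul_assoc, zero_mul, zero_add,
    neg_mul, mul_neg, neg_neg, mul_one]
  linear_combination (norm := module) (p (n+1) * q (n+1)) • hs • P

end QevAbstract


theorem qev_pairs {E : Type*} [Monoid E] (f : ℕ → E) (n : ℕ) :
    ((List.Ico 2 (2 * n + 2)).map f).prod =
      ((List.Ico 1 (n + 1)).map (fun k => f (2 * k) * f (2 * k + 1))).prod := by
  induction n with
  | zero => simp
  | succ n ih =>
    rw [show 2 * (n + 1) + 2 = 2 * n + 2 + 1 + 1 by ring, List.Ico.succ_top (by omega),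
      List.Ico.succ_top (by omega), List.Ico.succ_top (by omega : 1 ≤ n + 1)]
    simp only [List.map_append, List.prod_append, ih, List.map_cons, List.map_nil,
      List.prod_cons, List.prod_nil, mul_one, mul_assoc]
    rfl

theorem qev_dual (m i : ℕ) (g : QevR m) :
    (KaehlerDifferential.linearMapEquivDerivation ℂ (QevR m)).symm (qevV m i)
      (KaehlerDifferential.D ℂ (QevR m) g) = qevV m i g := by
  rw [KaehlerDifferential.linearMapEquivDerivation_symm_apply]
  exact Derivation.liftKaehlerDifferential_comp_D _ _

theorem qevZ_eq (m j : ℕ) (h : 2 ≤ j ∧ j ≤ 2 * m + 1) : qevZ m j = X ⟨j, h⟩ := dif_pos h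

/-- Lemma 3.7 of the paper:
`ι_{V_{m+1}} ι_{V_m} ι_{V₁} ⋯ ι_{V_{m−1}} Ω
 = ∑_{j=1}^m (−1)^{m+j} A_j dA₁∧⋯∧\widehat{dA_j}∧⋯∧dA_m` for the even quadric `Q_{2m}`. -/
theorem qev_contraction_lemma (m : ℕ) (hm : 2 ≤ m) :
    ((m + 1) :: m :: List.Ico 1 m).foldr (fun i ω => contrDer (qevV m i) ω) (qevOmega m) =
      ∑ j ∈ Finset.Icc 1 m, ((-1 : QevR m) ^ (m + j) * qevA m j) •
        (((List.Ico 1 (m + 1)).filter (fun k => k ≠ j)).map (fun k =>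
          ExteriorAlgebra.ι (QevR m) (KaehlerDifferential.D ℂ (QevR m) (qevA m k)))).prod := by
  have hO : qevOmega m = qpair (List.Ico 1 (m+1))
      (fun k => KaehlerDifferential.D ℂ (QevR m) (qevZ m (2 * k)))
      (fun k => KaehlerDifferential.D ℂ (QevR m) (qevZ m (2 * k + 1))) := by
    rw [qevOmega, qev_pairs]; rfl
  rw [hO]
  refine qc_main m (by omega)
      (fun k => KaehlerDifferential.D ℂ (QevR m) (qevZ m (2 * k)))
      (fun k => KaehlerDifferential.D ℂ (QevR m) (qevZ m (2 * k + 1)))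
      (fun k => KaehlerDifferential.D ℂ (QevR m) (qevA m k))
      (fun k => qevZ m (2 * k)) (fun k => qevZ m (2 * k + 1))
      (fun i => (KaehlerDifferential.linearMapEquivDerivation ℂ (QevR m)).symm (qevV m i))
      ?_ ?_ ?_ ?_ ?_ ?_ ?_
  · intro i
    exact Derivation.leibniz _ _ _
  · intro j h1 h2 i h3 h4
    refine (qev_dual m j _).trans ?_
    rw [qevV, if_neg (by omega), if_neg (by omega)]
    conv_lhs => rw [qevZ_eq m (2 * i) (by omega), mkDerivation_X]
    dsimp only
    split_ifs <;> first | rfl | omega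
  · intro j h1 h2 i h3 h4
    refine (qev_dual m j _).trans ?_
    rw [qevV, if_neg (by omega), if_neg (by omega)]
    conv_lhs => rw [qevZ_eq m (2 * i + 1) (by omega), mkDerivation_X]
    dsimp only
    split_ifs <;> first | rfl | omega
  · intro i h3 h4
    refine (qev_dual m _ _).trans ?_
    rw [qevV, if_pos rfl]
    conv_lhs => rw [qevZ_eq m (2 * i) (by omega), mkDerivation_X]
    dsimp only
    split_ifs <;> first | rfl | omega
  · intro i h3 h4
    refine (qev_dual m _ _).trans ?_
    rw [qevV, if_pos rfl]
    conv_lhs => rw [qevZ_eq m (2 * i + 1) (by omega), mkDerivation_X]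
    dsimp only
    split_ifs <;> first | rfl | omega
  · intro i h3 h4
    refine (qev_dual m _ _).trans ?_
    rw [qevV, if_neg (by omega), if_pos rfl]
    conv_lhs => rw [qevZ_eq m (2 * i) (by omega), mkDerivation_X]
    dsimp only
    split_ifs <;> first | rfl | omega
  · intro i h3 h4
    refine (qev_dual m _ _).trans ?_
    rw [qevV, if_neg (by omega), if_pos rfl]
    conv_lhs => rw [qevZ_eq m (2 * i + 1) (by omega), mkDerivation_X]
    dsimp only
    split_ifs <;> first | rfl | omega

end
end

section
/- Let R be a commutative ring, M an R-module, and m ≥ 2 an integer. Let z, a₁, …, a_m be invertible elements of R satisfying z + a₁ + ⋯ + a_m = 0, let ω₁, …, ω_m be elements of M, and set ζ = −(ω₁ + ⋯ + ω_m). Then in the exterior algebra ⋀_R M: (a₁^{−1}ω₁ − z^{−1}ζ) ∧ (a₂^{−1}ω₂ − z^{−1}ζ) ∧ ⋯ ∧ (a_{m−2}^{−1}ω_{m−2} − z^{−1}ζ) ∧ (a_m^{−1}ω_m − z^{−1}ζ) = (z a₁ a₂ ⋯ a_{m−2} a_m)^{−1} · Σ_{j=1}^{m} (−1)^{m+j}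 a_j ω₁∧⋯∧ω_{j−1}∧ω_{j+1}∧⋯∧ω_m. (This is the wedge-product identity established in the proof of Proposition 3.8 of the paper, applied there with z = z₁, a_j = A_j, ω_j = dA_j and ζ = dz₁.) -/
namespace WIQ
open ExteriorAlgebra

variable {R M : Type*} [CommRing R] [AddCommGroup M] [Module R M]

/-- wedge product along a list -/
noncomputable def P (ω : ℕ → M) (l : List ℕ) : ExteriorAlgebra R M :=
  (l.map (fun k => ExteriorAlgebra.ι R (ω k))).prod

/-- formal contraction along a list -/
noncomputable def D (a : ℕ → R) (ω : ℕ → M) : List ℕ → ExteriorAlgebra R M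
  | [] => 0
  | k :: l => a k • P ω l - ι R (ω k) * D a ω l

lemma P_cons (ω : ℕ → M) (k : ℕ) (l : List ℕ) :
    (P ω (k :: l) : ExteriorAlgebra R M) = ι R (ω k) * P ω l := by
  simp [P]

lemma anti (x y : M) : ι R x * ι R y = -(ι R y * ι R x) :=
  eq_neg_of_add_eq_zero_left (ι_add_mul_swap x y)

lemma anti' (x y : M) (t : ExteriorAlgebra R M) :
    ι R x * (ι R y * t) = -(ι R y * (ι R x * t)) := by
  rw [← mul_assoc, anti, neg_mul, mul_assoc]

lemma sq' (x : M) (t : ExteriorAlgebra R M) : ι R x * (ι R x * t) = 0 := by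
  rw [← mul_assoc, ι_sq_zero, zero_mul]

lemma mul_P_zero (ω : ℕ → M) (i : ℕ) (l : List ℕ) (h : i ∈ l) :
    ι R (ω i) * (P ω l : ExteriorAlgebra R M) = 0 := by
  induction l with
  | nil => simp at h
  | cons k l ih =>
    rw [P_cons]
    rcases List.mem_cons.1 h with rfl | h
    · exact sq' _ _
    · rw [anti', ih h, mul_zero, neg_zero]

lemma mul_D (a : ℕ → R) (ω : ℕ → M) (i : ℕ) (l : List ℕ) (h : i ∈ l) :
    ι R (ω i) * D a ω l = a i • P ω l := by
  induction l with
  | nil => simp at h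
  | cons k l ih =>
    rw [P_cons, D, mul_sub, mul_smul_comm]
    rcases List.mem_cons.1 h with rfl | h
    · rw [sq', sub_zero]
    · rw [anti', ih h, mul_P_zero ω i l h, mul_smul_comm]; simp

lemma P_swap (ω : ℕ → M) (p : ℕ) (l l' : List ℕ) :
    (P ω (l ++ p :: l') : ExteriorAlgebra R M) = (-1 : R) ^ l.length • P ω (p :: (l ++ l')) := by
  induction l with
  | nil => simp
  | cons k l ih =>
    simp only [List.cons_append, P_cons, ih, List.length_cons, mul_smul_comm]
    rw [anti' (ω k), pow_succ]
    simp

lemma D_swap (a : ℕ → R) (ω : ℕ → M) (p : ℕ) (l l' : List ℕ) :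
    D a ω (l ++ p :: l') = (-1 : R) ^ l.length • D a ω (p :: (l ++ l')) := by
  induction l with
  | nil => simp
  | cons k l ih =>
    simp only [List.cons_append, D, P_swap, ih, List.length_cons, mul_smul_comm, P_cons,
      mul_sub]
    rw [anti' (ω k) (ω p), pow_succ]
    module

lemma prod_eq (a : ℕ → Rˣ) (ω : ℕ → M) (c : R) (S : M) (l : List ℕ) :
    (l.map (fun k => ι R (((a k)⁻¹ : Rˣ) • ω k + c • S))).prod =
      ((((l.map a).prod)⁻¹ : Rˣ) : R) •
        (P ω l + c • (ι R S * D (fun k => (a k : R)) ω l)) := by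
  induction l with
  | nil => simp [P, D]
  | cons k l ih =>
    have e : (((a k)⁻¹ : Rˣ) • ω k + c • S) =
        (((a k)⁻¹ : Rˣ) : R) • (ω k + (c * (a k : R)) • S) := by
      rw [smul_add, smul_smul, Units.smul_def]
      congr 2
      rw [mul_left_comm, Units.inv_mul, mul_one]
    rw [List.map_cons, List.prod_cons, ih, e, map_smul, smul_mul_smul_comm, List.map_cons,
      List.prod_cons, mul_inv, Units.val_mul]
    congr 1
    rw [map_add, map_smul, P_cons, D]
    simp only [add_mul, mul_add, mul_sub, smul_mul_assoc, mul_smul_comm, sq']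
    rw [anti' (ω k) S]
    module

lemma D_Ico (a : ℕ → R) (ω : ℕ → M) (n s : ℕ) :
    D a ω (List.Ico s (s + n)) = ∑ j ∈ Finset.Ico s (s + n), ((-1 : R) ^ (s + j) * a j) •
      P ω ((List.Ico s (s + n)).filter (fun k => k ≠ j)) := by
  induction n generalizing s with
  | zero => simp [D]
  | succ n ih =>
    have e : s + (n + 1) = (s + 1) + n := by ring
    have hlt : s < s + 1 + n := by omega
    rw [e, List.Ico.eq_cons hlt, Finset.sum_eq_sum_Ico_succ_bot hlt, D, ih, sub_eq_add_neg]
    congr 1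
    · have : ((-1 : R) ^ (s + s)) = 1 := Even.neg_one_pow ⟨s, rfl⟩
      rw [this, one_mul, List.filter_cons_of_neg (by simp), List.filter_eq_self.2]
      intro x hx
      have := (List.Ico.mem.1 hx).1
      simp; omega
    · rw [Finset.mul_sum, ← Finset.sum_neg_distrib]
      refine Finset.sum_congr rfl fun j hj => ?_
      have := (Finset.mem_Ico.1 hj).1
      rw [List.filter_cons_of_pos (by simp; omega), P_cons, mul_smul_comm,
        show s + 1 + j = (s + j) + 1 by ring, pow_succ]
      module

lemma key (z : R) (a : ℕ → R) (ω : ℕ → M) (p : ℕ) (l : List ℕ)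
    (h : z + (a p + (l.map a).sum) = 0) :
    z • P ω l + ι R (ω p + (l.map ω).sum) * D a ω l = - D a ω (p :: l) := by
  have aux : ∀ l' : List ℕ, l' ⊆ l →
      ι R ((l'.map ω).sum) * D a ω l = (l'.map a).sum • P ω l := by
    intro l'
    induction l' with
    | nil => simp
    | cons k l' ih =>
      intro hl
      rw [List.map_cons, List.sum_cons, map_add, add_mul, ih (fun x hx => hl (by simp [hx])),
        mul_D a ω k l (hl (by simp)), List.map_cons, List.sum_cons, add_smul]
  rw [map_add, add_mul, aux l (fun _ h => h), D]
  have : z = -(a p + (l.map a).sum) := eq_neg_of_add_eq_zero_left h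
  rw [this]
  module

end WIQ

/-- For invertible `z, a₁, …, a_m ∈ R` with `z + a₁ + ⋯ + a_m = 0`,
`ω₁, …, ω_m ∈ M` and `ζ = −(ω₁ + ⋯ + ω_m)`:
`(a₁⁻¹ω₁ − z⁻¹ζ) ∧ ⋯ ∧ (a_{m−2}⁻¹ω_{m−2} − z⁻¹ζ) ∧ (a_m⁻¹ω_m − z⁻¹ζ)
 = (za₁⋯a_{m−2}a_m)⁻¹ · ∑_{j=1}^m (−1)^{m+j} a_j ω₁∧⋯∧ω_{j−1}∧ω_{j+1}∧⋯∧ω_m`. -/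
theorem wedge_identity_quadric {R M : Type*} [CommRing R] [AddCommGroup M] [Module R M]
    (m : ℕ) (hm : 2 ≤ m) (z : Rˣ) (a : ℕ → Rˣ) (ω : ℕ → M)
    (hza : (z : R) + ∑ i ∈ Finset.Icc 1 m, (a i : R) = 0) :
    (((List.Ico 1 (m - 1)).map (fun k =>
          ExteriorAlgebra.ι R (((a k)⁻¹ : Rˣ) • ω k -
            ((z⁻¹ : Rˣ) : R) • (-(∑ i ∈ Finset.Icc 1 m, ω i))))).prod) *
        ExteriorAlgebra.ι R (((a m)⁻¹ : Rˣ) • ω m -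
          ((z⁻¹ : Rˣ) : R) • (-(∑ i ∈ Finset.Icc 1 m, ω i))) =
      ((((z * (∏ k ∈ Finset.Icc 1 (m - 2), a k) * a m)⁻¹ : Rˣ) : R) •
        ∑ j ∈ Finset.Icc 1 m, ((-1 : R) ^ (m + j) * (a j : R)) •
          (((List.Ico 1 (m + 1)).filter (fun k => k ≠ j)).map (fun k =>
            ExteriorAlgebra.ι R (ω k))).prod) := by
  obtain ⟨n, rfl⟩ : ∃ n, m = n + 2 := ⟨m - 2, by omega⟩
  have hfull : List.Ico 1 (n + 2 + 1) = List.Ico 1 (n + 1) ++ (n + 1) :: [n + 2] := by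
    rw [List.Ico.succ_top (by omega), List.Ico.succ_top (by omega)]; simp
  have hsum : ∀ {A : Type _} [AddCommMonoid A] (f : ℕ → A), ∑ i ∈ Finset.Icc 1 (n + 2), f i =
      f (n + 1) + ((List.Ico 1 (n + 1) ++ [n + 2]).map f).sum := by
    intro A _ f
    have : ∑ i ∈ Finset.Icc 1 (n + 2), f i = ((List.Ico 1 (n + 2 + 1)).map f).sum := rfl
    rw [this, hfull]
    simp only [List.map_append, List.sum_append, List.map_cons, List.sum_cons]
    rw [add_left_comm]
  have hsum' : ∑ i ∈ Finset.Icc 1 (n + 2), (a i : R) =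
      (a (n + 1) : R) + ((List.Ico 1 (n + 1) ++ [n + 2]).map (fun i => (a i : R))).sum := by
    have : ∑ i ∈ Finset.Icc 1 (n + 2), (a i : R) =
      ((List.Ico 1 (n + 2 + 1)).map (fun i => (a i : R))).sum := rfl
    rw [this, hfull]
    simp only [List.map_append, List.sum_append, List.map_cons, List.sum_cons]
    rw [add_left_comm]
  have hprod : z * (∏ k ∈ Finset.Icc 1 n, a k) * a (n + 2) =
      z * ((List.Ico 1 (n + 1) ++ [n + 2]).map a).prod := by
    have : ∏ k ∈ Finset.Icc 1 n, a k = ((List.Ico 1 (n + 1)).map a).prod := rfl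
    rw [this]; simp [mul_assoc]
  have hk := WIQ.key (z : R) (fun i => (a i : R)) ω (n + 1) (List.Ico 1 (n + 1) ++ [n + 2])
    (by rw [← hsum']; exact hza)
  rw [← hsum ω] at hk
  have hD := WIQ.D_Ico (fun i => (a i : R)) ω (n + 2) 1
  rw [show 1 + (n + 2) = n + 2 + 1 by ring, hfull, WIQ.D_swap, ← hfull, List.Ico.length] at hD
  have hP := WIQ.prod_eq a ω ((z⁻¹ : Rˣ) : R) (∑ i ∈ Finset.Icc 1 (n + 2), ω i)
    (List.Ico 1 (n + 1) ++ [n + 2])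
  rw [List.map_append, List.prod_append, List.map_singleton, List.prod_singleton] at hP
  simp only [smul_neg, sub_neg_eq_add, show n + 2 - 1 = n + 1 from rfl,
    show n + 2 - 2 = n from rfl]
  rw [hP, hprod, mul_inv, Units.val_mul, mul_comm, mul_smul]
  congr 1
  have hR : ∑ j ∈ Finset.Icc 1 (n + 2), ((-1 : R) ^ (n + 2 + j) * (a j : R)) •
          (((List.Ico 1 (n + 2 + 1)).filter (fun k => k ≠ j)).map (fun k =>
            ExteriorAlgebra.ι R (ω k))).prod = (-1 : R) ^ (n + 1) •
      ∑ j ∈ Finset.Ico 1 (n + 2 + 1), ((-1 : R) ^ (1 + j) * (a j : R)) •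
      WIQ.P ω ((List.Ico 1 (n + 2 + 1)).filter (fun k => k ≠ j)) := by
    rw [Finset.smul_sum]
    refine Finset.sum_congr rfl fun j _ => ?_
    rw [smul_smul, ← mul_assoc, ← pow_add, show n + 1 + (1 + j) = n + 2 + j by ring]
    rfl
  rw [hR, ← hD, smul_smul ((-1 : R) ^ (n + 1)), ← pow_add, show n + 1 + (n + 1 - 1) = n + n + 1 by omega, pow_succ,
    Even.neg_one_pow ⟨n, rfl⟩, one_mul, neg_one_smul, ← hk, smul_add, smul_smul, Units.inv_mul,
    one_smul]
end
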